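/- Suppose f ∈ L²(ℂ, e^{|z|²} dA) and u : ℂ → ℂ is a locally integrable function solving ∂̄u = f in the sense of distributions, with ∫_ℂ |u(z)|² e^{ε|z|²} dA(z) < ∞ for some ε > 0. Then ∫_ℂ z^j f(z) dA(z) = 0 for every integer j ≥ 0. -/

import Mathlib

open MeasureTheory Complex Real Filter Topology

/-- Wirtinger derivative ∂̄ = (∂ₓ + i ∂_y)/2. -/
noncomputable def dbar (f : ℂ → ℂ) (z : ℂ) : ℂ :=
  (fderiv ℝ f z 1 + Complex.I * fderiv ℝ f z Complex.I) / 2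

/-- Wirtinger derivative ∂ = (∂ₓ - i ∂_y)/2. -/
noncomputable def dee (f : ℂ → ℂ) (z : ℂ) : ℂ :=
  (fderiv ℝ f z 1 - Complex.I * fderiv ℝ f z Complex.I) / 2

/-- ∂̄ applied to a real-valued function (viewed as complex-valued). -/
noncomputable def dbarR (φ : ℂ → ℝ) (z : ℂ) : ℂ := dbar (fun w => (φ w : ℂ)) z

/-- ∂ applied to a real-valued function (viewed as complex-valued). -/
noncomputable def deeR (φ : ℂ → ℝ) (z : ℂ) : ℂ := dee (fun w => (φ w : ℂ)) z

/-- Normalized Laplacian Δ̂ = (∂ₓ² + ∂_y²)/4. -/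
noncomputable def lapHat (φ : ℂ → ℝ) (z : ℂ) : ℝ :=
  (fderiv ℝ (fun w => fderiv ℝ φ w 1) z 1 +
   fderiv ℝ (fun w => fderiv ℝ φ w Complex.I) z Complex.I) / 4

/-- `u` solves `∂̄ u = f` in the sense of distributions. -/
def IsDbarSol (u f : ℂ → ℂ) : Prop :=
  ∀ ψ : ℂ → ℂ, ContDiff ℝ (⊤ : ℕ∞) ψ → HasCompactSupport ψ →
    ∫ z : ℂ, f z * ψ z = -∫ z : ℂ, u z * dbar ψ z

/-!
If `h` is entire then `∂̄(hu) = h ∂̄u`, so it suffices to see that `∫ f = 0` whenever `∂̄u = f` with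
`f` and `u` integrable. Let `χ` be a test function with `χ(0) = 1`. Testing the equation against the
dilate `z ↦ χ(cz)`, whose `∂̄`-derivative is `c (∂̄χ)(cz)`, gives
`∫ f(z) χ(cz) dA = -c ∫ u(z) (∂̄χ)(cz) dA` for real `c ≠ 0`. Both sides are continuous in `c`, and
`c = 0` is the claim. The Gaussian weights serve, through the Cauchy–Schwarz inequality, to make
`z ^ j f` and `z ^ j u` integrable.
-/

section Integrability

variable {α : Type*} [MeasurableSpace α] {μ : Measure α}

lemma aestronglyMeasurable_of_mul_left {𝕜 : Type*} [NormedField 𝕜] {f g : α → 𝕜}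
    (hg : AEStronglyMeasurable g μ) (hg0 : ∀ᵐ x ∂μ, g x ≠ 0)
    (hgf : AEStronglyMeasurable (fun x => g x * f x) μ) : AEStronglyMeasurable f μ :=
  (hg.inv₀.mul hgf).congr <| hg0.mono fun x hx => inv_mul_cancel_left₀ hx (f x)

lemma integrable_mul_of_integrable_sq_mul_weight {A : Type*} [NormedRing A] {f g : α → A}
    {w : α → ℝ} (hw : ∀ x, 0 < w x)
    (hf : AEStronglyMeasurable f μ) (hg : AEStronglyMeasurable g μ)
    (hfw : Integrable (fun x => ‖f x‖ ^ 2 * w x) μ)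
    (hgw : Integrable (fun x => ‖g x‖ ^ 2 * (w x)⁻¹) μ) :
    Integrable (fun x => f x * g x) μ := by
  refine (hfw.add hgw).mono' (hf.mul hg) (.of_forall fun x => ?_)
  have hsq : 0 ≤ (‖f x‖ * w x - ‖g x‖) ^ 2 * (w x)⁻¹ :=
    mul_nonneg (sq_nonneg _) (inv_pos.2 (hw x)).le
  have hexpand : (‖f x‖ * w x - ‖g x‖) ^ 2 * (w x)⁻¹ =
      ‖f x‖ ^ 2 * w x + ‖g x‖ ^ 2 * (w x)⁻¹ - 2 * (‖f x‖ * ‖g x‖) := by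
    have := (hw x).ne'
    field_simp
    ring
  calc ‖f x * g x‖ ≤ ‖f x‖ * ‖g x‖ := norm_mul_le _ _
    _ ≤ ‖f x‖ ^ 2 * w x + ‖g x‖ ^ 2 * (w x)⁻¹ := by
      linarith [mul_nonneg (norm_nonneg (f x)) (norm_nonneg (g x))]

end Integrability

lemma integrable_norm_pow_mul_exp_neg_mul_sq {E : Type*} [NormedAddCommGroup E] [NormedSpace ℝ E]
    [FiniteDimensional ℝ E] [Nontrivial E] [MeasurableSpace E] [BorelSpace E]
    (ν : Measure E) [ν.IsAddHaarMeasure] {b : ℝ} (hb : 0 < b) (n : ℕ) :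
    Integrable (fun x : E => ‖x‖ ^ n * Real.exp (-b * ‖x‖ ^ 2)) ν := by
  rw [integrable_fun_norm_addHaar ν (f := fun r : ℝ => r ^ n * Real.exp (-b * r ^ 2))]
  have hexp : (-1 : ℝ) < (Module.finrank ℝ E - 1 + n : ℕ) := by
    linarith [(Module.finrank ℝ E - 1 + n : ℕ).cast_nonneg (α := ℝ)]
  refine (integrable_rpow_mul_exp_neg_mul_sq hb hexp).integrableOn.congr_fun ?_ measurableSet_Ioi
  intro r _
  simp only [Real.rpow_natCast, pow_add, smul_eq_mul, mul_assoc]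

lemma integrable_pow_mul_of_integrable_sq_mul_exp {f : ℂ → ℂ} {b : ℝ}
    (hf : AEStronglyMeasurable f) (hb : 0 < b)
    (hfb : Integrable (fun z => ‖f z‖ ^ 2 * Real.exp (b * ‖z‖ ^ 2))) (j : ℕ) :
    Integrable (fun z => z ^ j * f z) := by
  have hmonomial : Integrable fun z : ℂ => ‖z ^ j‖ ^ 2 * (Real.exp (b * ‖z‖ ^ 2))⁻¹ := by
    simpa only [norm_pow, ← pow_mul, ← Real.exp_neg, neg_mul] using
      integrable_norm_pow_mul_exp_neg_mul_sq (volume : Measure ℂ) hb (j * 2)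
  simpa only [mul_comm] using integrable_mul_of_integrable_sq_mul_weight
    (fun z => Real.exp_pos _) hf (continuous_pow j).aestronglyMeasurable hfb hmonomial

lemma continuous_integral_mul_comp_smul {E A : Type*} [TopologicalSpace E] [MeasurableSpace E]
    [OpensMeasurableSpace E] [SMul ℝ E] [ContinuousSMul ℝ E] [NormedRing A] [NormedSpace ℝ A]
    [SecondCountableTopologyEither E A] {ν : Measure E} {f g : E → A} {C : ℝ}
    (hf : Integrable f ν) (hg : Continuous g) (hC : ∀ x, ‖g x‖ ≤ C) :
    Continuous fun c : ℝ => ∫ x, f x * g (c • x) ∂ν := by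
  refine continuous_of_dominated (bound := fun x => ‖f x‖ * C) (fun c => ?_)
    (fun c => .of_forall fun x => ?_) (hf.norm.mul_const C) (.of_forall fun x => ?_)
  · exact hf.aestronglyMeasurable.mul (hg.comp (continuous_const_smul c)).aestronglyMeasurable
  · exact (norm_mul_le _ _).trans (mul_le_mul_of_nonneg_left (hC _) (norm_nonneg _))
  · fun_prop

section Dbar

variable {g h : ℂ → ℂ} {z : ℂ}

lemma dbar_eq_zero_of_differentiableAt (hh : DifferentiableAt ℂ h z) : dbar h z = 0 := by
  have hI : fderiv ℂ h z Complex.I = Complex.I * fderiv ℂ h z 1 := by simp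
  simp only [dbar, hh.fderiv_restrictScalars ℝ, ContinuousLinearMap.coe_restrictScalars', hI]
  linear_combination fderiv ℂ h z 1 / 2 * Complex.I_mul_I

lemma dbar_mul (hg : DifferentiableAt ℝ g z) (hh : DifferentiableAt ℝ h z) :
    dbar (fun w => g w * h w) z = g z * dbar h z + h z * dbar g z := by
  simp only [dbar, fderiv_fun_mul hg hh, add_apply, smul_apply, smul_eq_mul]
  ring

lemma dbar_comp_smul (g : ℂ → ℂ) (c : ℝ) (z : ℂ) :
    dbar (fun w => g (c • w)) z = c * dbar g (c • z) := by
  rw [dbar, dbar, fderiv_comp_smul]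
  simp only [smul_apply, Complex.real_smul]
  ring

lemma continuous_dbar (hg : ContDiff ℝ 1 g) : Continuous (dbar g) := by
  have := hg.continuous_fderiv one_ne_zero
  unfold dbar
  fun_prop

lemma hasCompactSupport_dbar (hg : HasCompactSupport g) : HasCompactSupport (dbar g) :=
  (hg.fderiv ℝ).comp_left (g := fun L : ℂ →L[ℝ] ℂ => (L 1 + Complex.I * L Complex.I) / 2) (by simp)

end Dbar

namespace IsDbarSol

variable {u f : ℂ → ℂ}

lemma entire_mul {h : ℂ → ℂ} (hsol : IsDbarSol u f) (hh : Differentiable ℂ h) :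
    IsDbarSol (fun z => h z * u z) (fun z => h z * f z) := by
  intro ψ hψ hψc
  have hdbar (z : ℂ) : dbar (fun w => h w * ψ w) z = h z * dbar ψ z := by
    rw [dbar_mul ((hh z).restrictScalars ℝ) (hψ.differentiable (by simp) z),
      dbar_eq_zero_of_differentiableAt (hh z), mul_zero, add_zero]
  have htest := hsol (fun z => h z * ψ z) ((hh.contDiff.restrict_scalars ℝ).mul hψ) hψc.mul_left
  simpa only [hdbar, mul_left_comm, mul_assoc] using htest

lemma integral_mul_comp_smul {ψ : ℂ → ℂ} {c : ℝ} (hsol : IsDbarSol u f)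
    (hψ : ContDiff ℝ (⊤ : ℕ∞) ψ) (hψc : HasCompactSupport ψ) (hc : c ≠ 0) :
    ∫ z, f z * ψ (c • z) = -(c * ∫ z, u z * dbar ψ (c • z)) := by
  rw [hsol (fun z => ψ (c • z)) (hψ.comp (contDiff_const_smul c)) (hψc.comp_smul hc),
    ← integral_const_mul]
  simp only [dbar_comp_smul, mul_left_comm]

lemma integral_eq_zero (hsol : IsDbarSol u f) (hf : Integrable f) (hu : Integrable u) :
    ∫ z, f z = 0 := by
  obtain ⟨χ, -, hχc, hχ, -, hχ0⟩ :=
    exists_contDiff_tsupport_subset (n := (⊤ : ℕ∞)) (univ_mem : Set.univ ∈ 𝓝 (0 : ℂ))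
  let ψ : ℂ → ℂ := fun z => χ z
  have hψ : ContDiff ℝ (⊤ : ℕ∞) ψ := Complex.ofRealCLM.contDiff.comp hχ
  have hψc : HasCompactSupport ψ := hχc.comp_left Complex.ofReal_zero
  have hdψ : Continuous (dbar ψ) := continuous_dbar (hψ.of_le (by simp))
  obtain ⟨C, hC⟩ := hψc.exists_bound_of_continuous hψ.continuous
  obtain ⟨C', hC'⟩ := (hasCompactSupport_dbar hψc).exists_bound_of_continuous hdψ
  have hlhs : Continuous fun c : ℝ => ∫ z, f z * ψ (c • z) :=
    continuous_integral_mul_comp_smul hf hψ.continuous hC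
  have hrhs : Continuous fun c : ℝ => -(c * ∫ z, u z * dbar ψ (c • z)) :=
    (Complex.continuous_ofReal.mul (continuous_integral_mul_comp_smul hu hdψ hC')).neg
  have heq := hlhs.ext_on (dense_compl_singleton 0) hrhs fun c hc =>
    hsol.integral_mul_comp_smul hψ hψc hc
  simpa [ψ, hχ0] using congrFun heq 0

end IsDbarSol

theorem stmt8_general {f u h : ℂ → ℂ} (hsol : IsDbarSol u f) (hh : Differentiable ℂ h)
    (hf : Integrable fun z => h z * f z) (hu : Integrable fun z => h z * u z) :
    ∫ z, h z * f z = 0 :=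
  (hsol.entire_mul hh).integral_eq_zero hf hu

theorem stmt8 (f u : ℂ → ℂ)
    (hf : Integrable (fun z => ‖f z‖ ^ 2 * Real.exp (‖z‖ ^ 2)) volume)
    (hu : LocallyIntegrable u volume)
    (hsol : IsDbarSol u f)
    (ε : ℝ) (hε : 0 < ε)
    (huε : Integrable (fun z => ‖u z‖ ^ 2 * Real.exp (ε * ‖z‖ ^ 2)) volume) :
    ∀ j : ℕ, ∫ z : ℂ, z ^ j * f z = 0 := by
  intro j
  have huj := integrable_pow_mul_of_integrable_sq_mul_exp hu.aestronglyMeasurable hε huε j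
  by_cases hfm : AEStronglyMeasurable f
  · have hfj := integrable_pow_mul_of_integrable_sq_mul_exp hfm one_pos (by simpa using hf) j
    exact stmt8_general hsol (differentiable_pow j) hfj huj
  · -- The Bochner integral of a non-measurable function is `0` by convention.
    have hpow : ∀ᵐ z : ℂ, z ^ j ≠ 0 := (Measure.ae_ne volume 0).mono fun z hz => pow_ne_zero j hz
    exact integral_undef fun hfj => hfm <|
      aestronglyMeasurable_of_mul_left (continuous_pow j).aestronglyMeasurable hpow hfj.1
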